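/- arXiv:2212.07170 — 2 statements merged into one kernel-verified Lean document; each statement's English description precedes it below -/
import Mathlib

section
/- Let m ≥ 1 and consider, for t ∈ ℂ with |t| → 0, the m solutions of R_m(z) = e^t, i.e. the zeros of P_m(z) − e^t P_m(−z). The zeros of M_m(0,z) = P_m(z) − P_m(−z) are z = 0 together with conjugate pairs ±i r_ℓ, r_ℓ ∈ ℝ∖{0}, ℓ = 1,…,⌈m/2⌉−1. The solutions satisfy: ẑ_1(t,0) = t + O(t^{2m+1}); for each ℓ, ẑ_{2ℓ}(t,0) = i r_ℓ + δ_ℓ t + O(t²) and ẑ_{2ℓ+1}(t,0) = −i r_ℓ + δ_ℓ t + O(t²) with the SAME real constant δ_ℓ > 1 for both members of the pair. If m is odd, these account for all m solutions; if m is even, the remaining solution satisfies ẑ_m(t,0) = D_m/t + O(1) with the constant D_m = p_0/Π_ℓ r_ℓ² > 0. -/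
/-! STATEMENT 10: description of the `m` solutions of `R_m(z) = e^t` as `|t| → 0`:
zeros of `M_m(0,·)` are `0` and conjugate pairs `±i r_ℓ`, `ℓ = 1,…,⌈m/2⌉−1`;
`ẑ_1(t,0) = t + O(t^{2m+1})`; each pair gives `±i r_ℓ + δ_ℓ t + O(t²)` with the SAME
real `δ_ℓ > 1`; for even `m` the remaining solution is `D_m/t + O(1)` with
`D_m = p_0/Π r_ℓ² > 0`. -/

open Finset Complex Topology Asymptotics Polynomial

/-- `p_j = (2m−j)!/(j!(m−j)!)`, the coefficients of the Padé numerator `P_m`. -/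
noncomputable def pcoef (m j : ℕ) : ℂ :=
  ((2 * m - j).factorial : ℂ) / ((j.factorial : ℂ) * ((m - j).factorial : ℂ))

/-- The numerator `P_m` of the `(m,m)`-Padé approximant of the exponential. -/
noncomputable def Pgauss (m : ℕ) (z : ℂ) : ℂ :=
  ∑ j ∈ Finset.range (m + 1), pcoef m j * z ^ j

/-- The stability function `R_m = P_m(z)/P_m(−z)` of the m-stage Gauss method. -/
noncomputable def Rgauss (m : ℕ) (z : ℂ) : ℂ := Pgauss m z / Pgauss m (-z)

/-- `M_m(θ,z) = P_m(z) − e^{iθ}P_m(−z)` as a polynomial in `z`. -/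
noncomputable def MgaussPoly (m : ℕ) (θ : ℝ) : Polynomial ℂ :=
  ∑ j ∈ Finset.range (m + 1),
    Polynomial.C (pcoef m j * (1 + (-1) ^ (j + 1) * Complex.exp ((θ : ℂ) * Complex.I)))
      * Polynomial.X ^ j

/-- `P_m(z) − w·P_m(−z)` as a polynomial in `z`; its roots are the solutions of
`R_m(z) = w`. -/
noncomputable def QPade (m : ℕ) (w : ℂ) : Polynomial ℂ :=
  ∑ j ∈ Finset.range (m + 1),
    Polynomial.C (pcoef m j * (1 - (-1) ^ j * w)) * Polynomial.X ^ j


noncomputable def Ppol (m : ℕ) : ℂ[X] := ∑ j ∈ Finset.range (m + 1), C (pcoef m j) * X ^ j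

lemma Ppol_coeff (m j : ℕ) : (Ppol m).coeff j = if j ≤ m then pcoef m j else 0 := by
  simp [Ppol, Polynomial.coeff_C_mul, Polynomial.coeff_X_pow]

lemma Ppol_eval (m : ℕ) (z : ℂ) : (Ppol m).eval z = Pgauss m z := by
  simp [Ppol, Pgauss, Polynomial.eval_finsetSum]

lemma pcoef_add (j d : ℕ) : pcoef (j + d) j = ((j + 2 * d).factorial : ℂ) / (j.factorial * d.factorial) := by
  unfold pcoef
  rw [show 2 * (j + d) - j = j + 2 * d by omega, show j + d - j = d by omega]

lemma fac_ne (n : ℕ) : (n.factorial : ℂ) ≠ 0 := by exact_mod_cast n.factorial_ne_zero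

lemma Ppol_rec (m : ℕ) :
    Ppol (m + 2) = C (2 * (2 * (m : ℂ) + 3)) * Ppol (m + 1) + X ^ 2 * Ppol m := by
  ext j
  rw [coeff_add, coeff_C_mul, Polynomial.coeff_X_pow_mul']
  simp only [Ppol_coeff]
  rcases Nat.lt_or_ge j 2 with hj | hj
  · rw [if_pos (by omega), if_pos (by omega), if_neg (by omega)]
    have h1 := pcoef_add j (m + 2 - j)
    rw [show j + (m + 2 - j) = m + 2 by omega] at h1
    have h2 := pcoef_add j (m + 1 - j)
    rw [show j + (m + 1 - j) = m + 1 by omega] at h2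
    rw [h1, h2]
    have f1 := fac_ne m
    interval_cases j
    · rw [show 0 + 2 * (m + 2 - 0) = 2 * m + 4 by omega, show m + 2 - 0 = m + 2 by omega,
        show 0 + 2 * (m + 1 - 0) = 2 * m + 2 by omega, show m + 1 - 0 = m + 1 by omega]
      simp only [Nat.factorial]
      push_cast
      have : (m : ℂ) + 1 ≠ 0 := by exact_mod_cast Nat.succ_ne_zero m
      have : (m : ℂ) + 1 + 1 ≠ 0 := by exact_mod_cast Nat.succ_ne_zero (m+1)
      field_simp
      ring
    · rw [show 1 + 2 * (m + 2 - 1) = 2 * m + 3 by omega, show m + 2 - 1 = m + 1 by omega,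
        show 1 + 2 * (m + 1 - 1) = 2 * m + 1 by omega, show m + 1 - 1 = m by omega]
      simp only [Nat.factorial]
      push_cast
      have : (m : ℂ) + 1 ≠ 0 := by exact_mod_cast Nat.succ_ne_zero m
      field_simp
      ring
  · obtain ⟨i, rfl⟩ := Nat.exists_eq_add_of_le' hj
    simp only [Nat.add_sub_cancel, hj, if_true]
    have e1 : ((i : ℂ) + 1) ≠ 0 := by exact_mod_cast Nat.succ_ne_zero i
    have e2 : ((i : ℂ) + 1 + 1) ≠ 0 := by exact_mod_cast Nat.succ_ne_zero (i+1)
    have f1 := fac_ne i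
    rcases Nat.lt_trichotomy i m with h | h | h
    · obtain ⟨e, rfl⟩ := Nat.exists_eq_add_of_lt h
      rw [if_pos (by omega), if_pos (by omega), if_pos (by omega)]
      rw [show i + e + 1 + 2 = (i + 2) + (e + 1) by ring, show i + e + 1 + 1 = (i + 2) + e by ring,
        show i + e + 1 = i + (e + 1) by ring, pcoef_add, pcoef_add, pcoef_add]
      rw [show i + 2 + 2 * (e + 1) = (i + 2 * e) + 4 by ring, show i + 2 + 2 * e = (i + 2 * e) + 2 by ring,
        show i + 2 * (e + 1) = (i + 2 * e) + 2 by ring]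
      have e3 : ((e : ℂ) + 1) ≠ 0 := by exact_mod_cast Nat.succ_ne_zero e
      have f2 := fac_ne e
      simp only [Nat.factorial]
      push_cast
      field_simp
      ring
    · subst h
      rw [if_pos (by omega), if_neg (by omega), if_pos (by omega)]
      have h1 := pcoef_add i 0
      have h2 := pcoef_add (i+2) 0
      simp only [add_zero, mul_zero] at h1 h2
      rw [h1, h2]
      have := fac_ne (i+2)
      field_simp
      ring
    · rw [if_neg (by omega), if_neg (by omega), if_neg (by omega)]; ring

lemma Ppol_deriv (m : ℕ) :
    derivative (Ppol (m + 1)) = C (1 / 2) * (Ppol (m + 1) - X * Ppol m) := by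
  ext j
  rw [coeff_C_mul, coeff_sub, Polynomial.coeff_derivative]
  simp only [Ppol_coeff]
  rcases j with _ | i
  · rw [if_pos (by omega), if_pos (by omega)]
    simp only [coeff_X_mul_zero]
    have h1 := pcoef_add 0 (m + 1)
    have h2 := pcoef_add 1 m
    rw [show 0 + (m+1) = m + 1 by ring] at h1
    rw [show 1 + m = m + 1 by ring] at h2
    rw [h1, h2]
    rw [show 0 + 2 * (m + 1) = 2 * m + 2 by ring, show 1 + 2 * m = 2 * m + 1 by ring]
    have f2 := fac_ne m
    have : (m : ℂ) + 1 ≠ 0 := by exact_mod_cast Nat.succ_ne_zero m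
    simp only [Nat.factorial]
    push_cast
    field_simp
    ring
  · rw [coeff_X_mul, Ppol_coeff]
    have e1 : ((i : ℂ) + 1) ≠ 0 := by exact_mod_cast Nat.succ_ne_zero i
    have e2 : ((i : ℂ) + 1 + 1) ≠ 0 := by exact_mod_cast Nat.succ_ne_zero (i+1)
    have f1 := fac_ne i
    rcases Nat.lt_trichotomy i m with h | h | h
    · obtain ⟨e, rfl⟩ := Nat.exists_eq_add_of_lt h
      rw [if_pos (by omega), if_pos (by omega), if_pos (by omega)]
      have h1 := pcoef_add (i + 2) e
      have h2 := pcoef_add (i + 1) (e + 1)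
      have h3 := pcoef_add i (e + 1)
      rw [show i + 2 + e = i + e + 1 + 1 by ring, show i + 2 + 2 * e = (i + 2 * e) + 2 by ring] at h1
      rw [show i + 1 + (e + 1) = i + e + 1 + 1 by ring, show i + 1 + 2 * (e + 1) = (i + 2 * e) + 3 by ring] at h2
      rw [show i + (e + 1) = i + e + 1 by ring, show i + 2 * (e + 1) = (i + 2 * e) + 2 by ring] at h3
      rw [h1, h2, h3]
      have e3 : ((e : ℂ) + 1) ≠ 0 := by exact_mod_cast Nat.succ_ne_zero e
      have f2 := fac_ne e
      simp only [Nat.factorial]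
      push_cast
      field_simp
      ring
    · subst h
      rw [if_neg (by omega), if_pos (by omega), if_pos (by omega)]
      have h1 := pcoef_add i 0
      have h2 := pcoef_add (i+1) 0
      simp only [add_zero, mul_zero] at h1 h2
      rw [h1, h2]
      have := fac_ne (i+1)
      field_simp
      ring
    · rw [if_neg (by omega), if_neg (by omega), if_neg (by omega)]; ring

lemma Pg_zero (z : ℂ) : Pgauss 0 z = 1 := by simp [Pgauss, pcoef]

lemma Pg_one (z : ℂ) : Pgauss 1 z = 2 + z := by
  simp [Pgauss, pcoef, Finset.sum_range_succ, Nat.factorial]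

lemma Pg_rec (m : ℕ) (z : ℂ) :
    Pgauss (m + 2) z = 2 * (2 * (m : ℂ) + 3) * Pgauss (m + 1) z + z ^ 2 * Pgauss m z := by
  have := congrArg (Polynomial.eval z) (Ppol_rec m)
  simpa only [eval_add, eval_mul, eval_C, eval_pow, eval_X, Ppol_eval] using this

lemma Pg_hasDeriv (m : ℕ) (z : ℂ) :
    HasDerivAt (Pgauss (m + 1)) (1 / 2 * (Pgauss (m + 1) z - z * Pgauss m z)) z := by
  have h := (Ppol (m + 1)).hasDerivAt z
  rw [Ppol_deriv] at h
  simp only [eval_mul, eval_C, eval_sub, eval_X, Ppol_eval] at h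
  exact h

/-- Casoratian. -/
lemma Pg_cas (m : ℕ) (z : ℂ) :
    Pgauss (m + 1) z * Pgauss m (-z) - Pgauss m z * Pgauss (m + 1) (-z)
      = 2 * z * (-z ^ 2) ^ m := by
  induction m with
  | zero => simp [Pg_zero, Pg_one]; ring
  | succ k ih =>
    rw [Pg_rec, Pg_rec, pow_succ]
    linear_combination (-z ^ 2) * ih

lemma Pg_at_zero (m : ℕ) : Pgauss m 0 ≠ 0 := by
  have : Pgauss m 0 = pcoef m 0 := by
    unfold Pgauss
    rw [Finset.sum_range_succ']
    simp
  rw [this, pcoef]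
  exact div_ne_zero (fac_ne _) (mul_ne_zero (fac_ne _) (fac_ne _))

lemma Pg_not_both (m : ℕ) (z : ℂ) (h1 : Pgauss (m+1) z = 0) (h2 : Pgauss (m+1) (-z) = 0) : False := by
  by_cases hz : z = 0
  · subst hz; exact Pg_at_zero _ h1
  · have := Pg_cas m z
    rw [h1, h2] at this
    have h3 : 2 * z * (-z ^ 2) ^ m ≠ 0 := by simp [hz]
    apply h3; rw [← this]; ring

lemma Rg_hasDeriv (m : ℕ) (z : ℂ) (hz : Pgauss (m + 1) (-z) ≠ 0) :
    HasDerivAt (Rgauss (m + 1))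
      (Rgauss (m + 1) z - (-z ^ 2) ^ (m + 1) / Pgauss (m + 1) (-z) ^ 2) z := by
  have h1 := Pg_hasDeriv m z
  have h2 := (Pg_hasDeriv m (-z)).scomp z (hasDerivAt_neg z)
  have h := h1.div h2 hz
  have hc := Pg_cas m z
  have h' : HasDerivAt (Rgauss (m + 1)) _ z := h
  convert h' using 1
  simp only [Rgauss, Function.comp, smul_eq_mul]
  rw [pow_succ, div_sub_div _ _ hz (pow_ne_zero 2 hz), div_eq_div_iff (mul_ne_zero hz (pow_ne_zero 2 hz)) (pow_ne_zero 2 hz)]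
  linear_combination (-(1/2) * z * Pgauss (m + 1) (-z) ^ 3) * hc

lemma Pg_conj (m : ℕ) (z : ℂ) : Pgauss m ((starRingEnd ℂ) z) = (starRingEnd ℂ) (Pgauss m z) := by
  simp [Pgauss, pcoef, map_sum]

lemma Rg_eq (m : ℕ) (z w : ℂ) (h : Pgauss (m+1) z = w * Pgauss (m+1) (-z)) :
    Pgauss (m+1) (-z) ≠ 0 ∧ Rgauss (m+1) z = w := by
  have : Pgauss (m+1) (-z) ≠ 0 := by
    intro h0
    rw [h0, mul_zero] at h
    exact Pg_not_both m z h h0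
  exact ⟨this, by rw [Rgauss, h]; field_simp⟩


/-- Twice the odd part of `P_m`. -/
noncomputable def OO (k : ℕ) (z : ℂ) : ℂ := Pgauss k z - Pgauss k (-z)

lemma OO_zero (z : ℂ) : OO 0 z = 0 := by simp [OO, Pg_zero]
lemma OO_one (z : ℂ) : OO 1 z = 2 * z := by simp [OO, Pg_one]; ring
lemma OO_rec (k : ℕ) (z : ℂ) :
    OO (k + 2) z = 2 * (2 * (k : ℂ) + 3) * OO (k + 1) z + z ^ 2 * OO k z := by
  simp only [OO, Pg_rec]; ring

lemma Pg_diff (m : ℕ) : Differentiable ℂ (Pgauss m) := by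
  have : Pgauss m = fun z => (Ppol m).eval z := by ext z; rw [Ppol_eval]
  rw [this]; exact (Ppol m).differentiable

lemma OO_diff (k : ℕ) : Differentiable ℂ (OO k) := by
  unfold OO
  have := Pg_diff k
  fun_prop

noncomputable def DD (k : ℕ) (z : ℂ) : ℂ := deriv (OO k) z

lemma DD_zero (z : ℂ) : DD 0 z = 0 := by
  have : OO 0 = fun _ => 0 := by ext; rw [OO_zero]
  rw [DD, this]; simp

lemma DD_rec (k : ℕ) (z : ℂ) :
    DD (k + 2) z = 2 * (2 * (k : ℂ) + 3) * DD (k + 1) z + z ^ 2 * DD k z + 2 * z * OO k z := by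
  have h : OO (k + 2) = fun z => 2 * (2 * (k : ℂ) + 3) * OO (k + 1) z + z ^ 2 * OO k z := by
    ext; rw [OO_rec]
  have h1 := ((OO_diff (k + 1)) z).hasDerivAt
  have h2 := ((OO_diff k) z).hasDerivAt
  have h3 := (h1.const_mul (2 * (2 * (k : ℂ) + 3))).add (((hasDerivAt_id z).pow 2).mul h2)
  have h4 := h3.congr_of_eventuallyEq (Filter.Eventually.of_forall fun w => congrFun h w)
  rw [DD, h4.deriv]
  simp [DD]
  ring

lemma DD_succ (n : ℕ) (z : ℂ) :
    DD (n + 1) z = 1 / 2 * (Pgauss (n + 1) z + Pgauss (n + 1) (-z) - z * OO n z) := by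
  have h1 := Pg_hasDeriv n z
  have h2 := (Pg_hasDeriv n (-z)).scomp z (hasDerivAt_neg z)
  have h : HasDerivAt (OO (n + 1)) _ z := h1.sub h2
  rw [DD, h.deriv]
  simp [OO]
  ring

noncomputable def GG (k : ℕ) (z : ℂ) : ℂ :=
  z * (DD (k + 1) z * OO k z - DD k z * OO (k + 1) z) - OO k z * OO (k + 1) z

lemma GG_zero (z : ℂ) : GG 0 z = 0 := by simp [GG, OO_zero, DD_zero]

lemma GG_rec (k : ℕ) (z : ℂ) :
    GG (k + 1) z = -z ^ 2 * GG k z - 2 * (2 * (k : ℂ) + 3) * OO (k + 1) z ^ 2 := by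
  simp only [GG]
  rw [show k + 1 + 1 = k + 2 by ring, DD_rec, OO_rec]
  ring

lemma conj_yI (y : ℝ) : (starRingEnd ℂ) ((y : ℂ) * I) = -((y : ℂ) * I) := by simp

lemma OO_imag (k : ℕ) (y : ℝ) : ∃ o : ℝ, OO k (y * I) = o * I := by
  refine ⟨(OO k (y * I)).im, ?_⟩
  have h : (starRingEnd ℂ) (OO k (y * I)) = - OO k (y * I) := by
    rw [OO, map_sub, ← Pg_conj, ← Pg_conj, map_neg, conj_yI, neg_neg]; ring
  have h2 := congrArg Complex.re h
  simp only [Complex.conj_re, Complex.neg_re] at h2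
  apply Complex.ext
  · simp; linarith
  · simp

lemma GG_pos (k : ℕ) (y : ℝ) (hy : y ≠ 0) : ∃ g : ℝ, 0 < g ∧ GG (k + 1) (y * I) = g := by
  induction k with
  | zero =>
    refine ⟨24 * y ^ 2, by positivity, ?_⟩
    rw [GG_rec, GG_zero, OO_one]
    push_cast
    linear_combination (-24 * (y : ℂ) ^ 2) * I_sq
  | succ k ih =>
    obtain ⟨g, hg, h⟩ := ih
    obtain ⟨o, ho⟩ := OO_imag (k + 1 + 1) y
    refine ⟨y ^ 2 * g + 2 * (2 * (k + 1) + 3) * o ^ 2, by positivity, ?_⟩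
    rw [GG_rec, h, ho]
    push_cast
    linear_combination (-(y : ℂ) ^ 2 * g - 2 * (2 * (k + 1) + 3) * (o : ℂ) ^ 2) * I_sq

/-- energy identity giving that nonzero zeros of the odd part are imaginary. -/
lemma VV (k : ℕ) (z : ℂ) (hz : z ≠ 0) : ∃ S : ℝ, 0 < S ∧
    (OO (k + 2) z * (starRingEnd ℂ) (OO (k + 1) z) * (starRingEnd ℂ) z).re = z.re * S := by
  have hn : 0 < normSq z := normSq_pos.mpr hz
  have key : ∀ k : ℕ, (OO (k + 2) z * (starRingEnd ℂ) (OO (k + 1) z) * (starRingEnd ℂ) z).re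
      = z.re * (2 * (2 * (k : ℝ) + 3) * normSq (OO (k + 1) z))
        + normSq z * (OO (k + 1) z * (starRingEnd ℂ) (OO k z) * (starRingEnd ℂ) z).re := by
    intro k
    rw [OO_rec]
    generalize OO (k + 1) z = a
    generalize OO k z = b
    have : (2 * (2 * (k : ℂ) + 3)) = ((2 * (2 * (k : ℝ) + 3) : ℝ) : ℂ) := by push_cast; ring
    rw [this]
    generalize (2 * (2 * (k : ℝ) + 3) : ℝ) = c
    simp only [normSq_apply, mul_re, mul_im, add_re, add_im, conj_re, conj_im, ofReal_re, ofReal_im, pow_two]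
    ring
  induction k with
  | zero =>
    refine ⟨6 * normSq (OO 1 z), ?_, ?_⟩
    · have : OO 1 z ≠ 0 := by rw [OO_one]; simp [hz]
      have := normSq_pos.mpr this
      positivity
    · rw [key 0, OO_zero]; simp; left; norm_num
  | succ k ih =>
    obtain ⟨S, hS, h⟩ := ih
    refine ⟨2 * (2 * ((k + 1 : ℕ) : ℝ) + 3) * normSq (OO (k + 2) z) + normSq z * S, ?_, ?_⟩
    · have := normSq_nonneg (OO (k + 2) z)
      positivity
    · rw [key (k + 1)]
      rw [show k + 1 + 1 = k + 2 by ring, h]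
      ring

lemma OO_root_imag (n : ℕ) (z : ℂ) (hz : z ≠ 0) (h : OO (n + 1) z = 0) :
    ∃ y : ℝ, y ≠ 0 ∧ z = y * I := by
  have hre : z.re = 0 := by
    rcases n with _ | k
    · rw [OO_one] at h; simp [hz] at h
    · obtain ⟨S, hS, h2⟩ := VV k z hz
      rw [show k + 1 + 1 = k + 2 by ring] at h
      rw [h] at h2
      simp at h2
      rcases h2 with h2 | h2
      · exact h2
      · exact absurd h2 hS.ne'
  have hz2 : z = z.im * I := by
    apply Complex.ext <;> simp [hre]
  refine ⟨z.im, ?_, hz2⟩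
  intro h0
  rw [h0] at hz2
  simp at hz2
  exact hz hz2

lemma OO_root_delta (n : ℕ) (y : ℝ) (hy : y ≠ 0) (h : OO (n + 1) (y * I) = 0) :
    ∃ δ : ℝ, 1 < δ ∧ HasDerivAt (Rgauss (n + 1)) (1 / (δ : ℂ)) (y * I) ∧
      HasDerivAt (Rgauss (n + 1)) (1 / (δ : ℂ)) (-(y * I)) := by
  set z : ℂ := y * I with hzdef
  have hz : z ≠ 0 := by simp [z, hy]
  have hE : Pgauss (n + 1) z = Pgauss (n + 1) (-z) := by rw [OO] at h; exact sub_eq_zero.mp h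
  obtain ⟨hE0, hR⟩ := Rg_eq n z 1 (by rw [one_mul]; exact hE)
  obtain ⟨hE0', hR'⟩ := Rg_eq n (-z) 1 (by rw [one_mul, neg_neg]; exact hE.symm)
  have hd := Rg_hasDeriv n z hE0
  have hd' := Rg_hasDeriv n (-z) hE0'
  rw [hR] at hd
  rw [hR', neg_neg, hE, neg_sq] at hd'
  have hreal : ∃ e : ℝ, Pgauss (n + 1) (-z) = e := by
    have : (starRingEnd ℂ) (Pgauss (n + 1) (-z)) = Pgauss (n + 1) (-z) := by
      rw [← Pg_conj, map_neg, conj_yI, neg_neg, hE]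
    exact ⟨_, (Complex.conj_eq_iff_real.mp this).choose_spec⟩
  obtain ⟨e, he⟩ := hreal
  have he0 : e ≠ 0 := by rintro rfl; apply hE0; simpa using he
  have hz2 : -z ^ 2 = ((y ^ 2 : ℝ) : ℂ) := by
    rw [hzdef, mul_pow, I_sq]; push_cast; ring
  set d : ℝ := 1 - (y ^ 2) ^ (n + 1) / e ^ 2 with hdd
  have hdc : 1 - (-z ^ 2) ^ (n + 1) / Pgauss (n + 1) (-z) ^ 2 = (d : ℂ) := by
    rw [hz2, he, hdd]; push_cast; ring
  have hd1 : d < 1 := by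
    have : 0 < (y ^ 2) ^ (n + 1) / e ^ 2 := by positivity
    linarith
  have hd0 : 0 < d := by
    rcases n with _ | k
    · rw [OO_one] at h; simp [hz] at h
    · obtain ⟨g, hg, hG⟩ := GG_pos k y hy
      have hc := Pg_cas (k + 1) z
      rw [hE] at hc
      have hG2 : GG (k + 1) z = 2 * (-z ^ 2) ^ (k + 1 + 1) * (1 - (-z ^ 2) ^ (k + 1 + 1) / Pgauss (k + 1 + 1) (-z) ^ 2) := by
        rw [GG, h, DD_succ, hE]
        have hO : OO (k + 1) z = - (2 * z * (-z ^ 2) ^ (k + 1)) / Pgauss (k + 1 + 1) (-z) := by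
          rw [eq_div_iff hE0, ← hc, OO]; ring
        rw [hO]
        field_simp
        ring
      rw [hdc, hG, hz2] at hG2
      have hG3 : g = 2 * (y ^ 2) ^ (k + 1 + 1) * d := by exact_mod_cast hG2
      rw [hG3] at hg
      exact (pos_iff_pos_of_mul_pos hg).mp (by positivity)
  refine ⟨1 / d, ?_, ?_, ?_⟩
  · rw [lt_div_iff₀ hd0]; linarith
  · rw [hdc] at hd; simpa using hd
  · rw [hdc] at hd'; simpa using hd'


lemma bigO_int (f f' : ℂ → ℂ) (n : ℕ) (hf : ∀ᶠ x in 𝓝 (0 : ℂ), HasDerivAt f (f' x) x)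
    (h0 : f 0 = 0) (hO : f' =O[𝓝 (0 : ℂ)] fun x => x ^ n) :
    f =O[𝓝 (0 : ℂ)] fun x => x ^ (n + 1) := by
  obtain ⟨C, hC⟩ := hO.bound
  obtain ⟨ε, hε, h⟩ := Metric.eventually_nhds_iff.mp (hf.and hC)
  refine IsBigO.of_bound C ?_
  refine Metric.eventually_nhds_iff.mpr ⟨ε, hε, fun x hx => ?_⟩
  have hC0 : 0 ≤ C * ‖x‖ ^ n := by
    have := (h hx).2
    rw [norm_pow] at this
    exact le_trans (norm_nonneg _) this
  have key := Convex.norm_image_sub_le_of_norm_hasDerivWithin_le (f := f) (f' := f')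
    (s := Metric.closedBall (0 : ℂ) ‖x‖) (C := C * ‖x‖ ^ n) (x := 0) (y := x) ?_ ?_
    (convex_closedBall _ _) (by simp) (by simp)
  · rw [h0, sub_zero, sub_zero] at key
    rw [norm_pow, pow_succ, ← mul_assoc]
    exact key
  · intro y hy
    have hy' : dist y 0 < ε := lt_of_le_of_lt (by simpa using hy) (by simpa using hx)
    exact (h hy').1.hasDerivWithinAt
  · intro y hy
    have hyx : ‖y‖ ≤ ‖x‖ := by simpa using hy
    have hy' : dist y 0 < ε := lt_of_le_of_lt (by simpa using hy) (by simpa using hx)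
    have h2 := (h hy').2
    rw [norm_pow] at h2
    by_cases hx0 : ‖x‖ = 0
    · have : ‖y‖ = ‖x‖ := le_antisymm hyx (by rw [hx0]; exact norm_nonneg _)
      rwa [this] at h2
    · have hC' : 0 ≤ C := by
        have : 0 < ‖x‖ ^ n := pow_pos (lt_of_le_of_ne (norm_nonneg _) (Ne.symm hx0)) _
        exact nonneg_of_mul_nonneg_left hC0 this
      exact h2.trans (by gcongr)

lemma Rg_analytic (m : ℕ) (z : ℂ) (hz : Pgauss m (-z) ≠ 0) : AnalyticAt ℂ (Rgauss m) z := by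
  have h1 : AnalyticAt ℂ (Pgauss m) z := (Pg_diff m).analyticAt z
  have h2 : AnalyticAt ℂ (fun z => Pgauss m (-z)) z :=
    (Differentiable.comp (Pg_diff m) differentiable_neg).analyticAt z
  exact h1.div h2 hz

/-- local branch of solutions. -/
lemma branch (m : ℕ) (ζ δ : ℂ) (hP : Pgauss m (-ζ) ≠ 0) (hR : Rgauss m ζ = 1) (hδ : δ ≠ 0)
    (hd : HasDerivAt (Rgauss m) (1 / δ) ζ) :
    ∃ z : ℂ → ℂ, AnalyticAt ℂ z 0 ∧ z 0 = ζ ∧ (∀ᶠ t in 𝓝 (0 : ℂ), Rgauss m (z t) = exp t) ∧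
      ((fun t : ℂ => z t - (ζ + δ * t)) =O[𝓝 (0 : ℂ)] fun t : ℂ => t ^ 2) := by
  have hA := Rg_analytic m ζ hP
  have hd' : deriv (Rgauss m) ζ ≠ 0 := by rw [hd.deriv]; simpa using hδ
  have hinv := hA.analyticAt_localInverse hd'
  have hright := hA.hasStrictDerivAt.eventually_right_inverse hd'
  have hat := HasStrictFDerivAt.localInverse_apply_image (hA.hasStrictDerivAt.hasStrictFDerivAt_equiv hd')
  have hder := (hA.hasStrictDerivAt.to_localInverse hd').hasDerivAt
  set g := hA.hasStrictDerivAt.localInverse (Rgauss m) (deriv (Rgauss m) ζ) ζ hd' with hg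
  have hexp : AnalyticAt ℂ exp (0 : ℂ) := Complex.differentiable_exp.analyticAt 0
  have hz0 : g (exp 0) = ζ := by rw [exp_zero, ← hR]; exact hat
  rw [hR, ← exp_zero] at hinv hright hder
  have hz : AnalyticAt ℂ (fun t => g (exp t)) 0 := hinv.comp hexp
  have hzd : HasDerivAt (fun t => g (exp t)) δ 0 := by
    have := hder.comp (0 : ℂ) (Complex.hasDerivAt_exp 0)
    have h2 : HasDerivAt (fun t => g (exp t)) _ 0 := this
    convert h2 using 1
    rw [hd.deriv]; simp
  refine ⟨fun t => g (exp t), hz, hz0, Complex.continuous_exp.continuousAt.eventually hright, ?_⟩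
  refine bigO_int _ (fun t => deriv (fun t => g (exp t)) t - δ) 1 ?_ ?_ ?_
  · filter_upwards [hz.eventually_analyticAt] with t ht
    have h1 := ht.differentiableAt.hasDerivAt
    have h2 := ((hasDerivAt_id t).const_mul δ).const_add ζ
    have h3 : HasDerivAt (fun t => g (exp t) - (ζ + δ * t)) _ t := h1.sub h2
    convert h3 using 1
    simp
  · simp only [hz0]; ring
  · have := hz.deriv.differentiableAt.isBigO_sub
    rw [hzd.deriv] at this
    simpa using this

lemma branch_one (n : ℕ) (z : ℂ → ℂ) (hz : AnalyticAt ℂ z 0) (hz0 : z 0 = 0)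
    (hR : ∀ᶠ t in 𝓝 (0 : ℂ), Rgauss (n + 1) (z t) = exp t) :
    (fun t : ℂ => z t - t) =O[𝓝 (0 : ℂ)] fun t : ℂ => t ^ (2 * (n + 1) + 1) := by
  have hP0 : Pgauss (n + 1) (-0) ≠ 0 := by rw [neg_zero]; exact Pg_at_zero _
  have hPc : Continuous fun w : ℂ => Pgauss (n + 1) (-w) := (Pg_diff (n+1)).continuous.comp continuous_neg
  have hPe : ∀ᶠ w in 𝓝 (0 : ℂ), Pgauss (n + 1) (-w) ≠ 0 := hPc.continuousAt.eventually_ne hP0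
  have hg : (fun w : ℂ => Rgauss (n + 1) w * exp (-w) - 1) =O[𝓝 (0 : ℂ)] fun w => w ^ (2 * (n + 1) + 1) := by
    refine bigO_int _ (fun w => -((-w ^ 2) ^ (n + 1) / Pgauss (n + 1) (-w) ^ 2) * exp (-w)) _ ?_ ?_ ?_
    · filter_upwards [hPe] with w hw
      have h1 := Rg_hasDeriv n w hw
      have h2 : HasDerivAt (fun w : ℂ => exp (-w)) (-exp (-w)) w := by
        simpa using (hasDerivAt_neg w).cexp
      have h3 : HasDerivAt (fun w : ℂ => Rgauss (n + 1) w * exp (-w) - 1) _ w :=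
        (h1.mul h2).sub_const 1
      convert h3 using 1
      ring
    · simp only [Rgauss, neg_zero, exp_zero, mul_one]
      rw [div_self (Pg_at_zero _), sub_self]
    · have hc : ContinuousAt (fun w : ℂ => - (-1) ^ (n + 1) * (exp (-w) / Pgauss (n + 1) (-w) ^ 2)) 0 := by
        refine continuousAt_const.mul (ContinuousAt.div (by fun_prop) (hPc.continuousAt.pow 2) ?_)
        exact pow_ne_zero 2 hP0
      have h1 := hc.tendsto.isBigO_one (F := ℂ)
      have h2 := h1.mul (isBigO_refl (fun w : ℂ => w ^ (2 * (n + 1))) (𝓝 (0 : ℂ)))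
      simp only [one_mul] at h2
      refine h2.congr_left fun w => ?_
      rw [neg_pow (w ^ 2), ← pow_mul]
      ring
  have hzt : Filter.Tendsto z (𝓝 0) (𝓝 0) := by
    have := hz.continuousAt.tendsto; rwa [hz0] at this
  have hzO : z =O[𝓝 (0 : ℂ)] fun t => t := by
    have := hz.differentiableAt.isBigO_sub
    simpa [hz0] using this
  have h1 := (hg.comp_tendsto hzt).trans (hzO.pow (2 * (n + 1) + 1))
  have h2 : (fun t => exp (t - z t) - 1) =O[𝓝 (0 : ℂ)] fun t => t ^ (2 * (n + 1) + 1) := by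
    refine h1.congr' ?_ (Filter.EventuallyEq.refl _ _)
    filter_upwards [hR] with t ht
    simp only [Function.comp]
    rw [ht, ← exp_add, ← sub_eq_add_neg]
  have hu : Filter.Tendsto (fun t => t - z t) (𝓝 0) (𝓝 0) := by
    have := (Filter.tendsto_id (α := ℂ) (x := 𝓝 0)).sub hzt
    simpa using this
  have h3 : (fun u : ℂ => u) =O[𝓝 (0 : ℂ)] fun u => exp u - 1 := by
    have := ((Complex.hasDerivAt_exp 0).isTheta_sub (by simp)).2
    simpa [Function.comp_def] using this
  have h4 := (h3.comp_tendsto hu).trans h2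
  refine h4.neg_left.congr_left fun t => ?_
  simp


lemma Q_eval (m : ℕ) (w z : ℂ) : (QPade m w).eval z = Pgauss m z - w * Pgauss m (-z) := by
  simp only [QPade, Pgauss, Polynomial.eval_finsetSum, eval_mul, eval_C, eval_pow, eval_X,
    Finset.mul_sum, ← Finset.sum_sub_distrib]
  refine Finset.sum_congr rfl fun j _ => ?_
  rw [neg_pow z]; ring

lemma Q_coeff (m : ℕ) (w : ℂ) (j : ℕ) :
    (QPade m w).coeff j = if j ≤ m then pcoef m j * (1 - (-1) ^ j * w) else 0 := by
  unfold QPade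
  simp only [finsetSum_coeff, coeff_C_mul, coeff_X_pow, mul_ite, mul_one, mul_zero,
    Finset.sum_ite_eq, Finset.mem_range, Nat.lt_succ_iff]

lemma M_eq (m : ℕ) : MgaussPoly m 0 = QPade m 1 := by
  unfold MgaussPoly QPade
  refine Finset.sum_congr rfl fun j _ => ?_
  congr 2
  simp [pow_succ]
  ring_nf
  simp

lemma pcoef_ne (m j : ℕ) : pcoef m j ≠ 0 :=
  div_ne_zero (fac_ne _) (mul_ne_zero (fac_ne _) (fac_ne _))

lemma Q_natDegree_le (m : ℕ) (w : ℂ) : (QPade m w).natDegree ≤ m := by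
  rw [natDegree_le_iff_coeff_eq_zero]
  intro j hj
  rw [Q_coeff, if_neg (by omega)]

lemma Q_natDegree (m : ℕ) (w : ℂ) (h : 1 - (-1) ^ m * w ≠ 0) : (QPade m w).natDegree = m := by
  refine natDegree_eq_of_le_of_coeff_ne_zero (Q_natDegree_le m w) ?_
  rw [Q_coeff, if_pos le_rfl]
  exact mul_ne_zero (pcoef_ne _ _) h

lemma M_natDegree_odd (m : ℕ) (hm : Odd m) : (QPade m 1).natDegree = m := by
  apply Q_natDegree
  rw [hm.neg_one_pow]; norm_num

lemma M_natDegree_even (n : ℕ) (hm : Even (n + 1)) : (QPade (n + 1) 1).natDegree = n := by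
  have hn : Odd n := by
    rcases Nat.even_or_odd n with h | h
    · exact absurd hm (by simpa [Nat.even_add_one] using h)
    · exact h
  refine natDegree_eq_of_le_of_coeff_ne_zero ?_ ?_
  · rw [natDegree_le_iff_coeff_eq_zero]
    intro j hj
    rw [Q_coeff]
    split_ifs with h
    · have : j = n + 1 := by omega
      rw [this, hm.neg_one_pow]; simp
    · rfl
  · rw [Q_coeff, if_pos (by omega), hn.neg_one_pow]
    refine mul_ne_zero (pcoef_ne _ _) (by norm_num)

lemma M_coeff_even (n : ℕ) (hn : Odd n) : (QPade (n + 1) 1).coeff n = 2 * pcoef (n + 1) n := by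
  rw [Q_coeff, if_pos (by omega), hn.neg_one_pow]; ring

lemma M_ne (n : ℕ) : QPade (n + 1) 1 ≠ 0 := by
  intro h
  have h1 := Q_coeff (n + 1) 1 1
  rw [h, if_pos (by omega)] at h1
  simp [pcoef_ne] at h1

lemma M_eval (m : ℕ) (z : ℂ) : (QPade m 1).eval z = OO m z := by
  rw [Q_eval, OO, one_mul]

lemma M_deriv (m : ℕ) (z : ℂ) : (derivative (QPade m 1)).eval z = DD m z := by
  have h := (QPade m 1).hasDerivAt z
  have e : (fun x => eval x (QPade m 1)) = OO m := by ext; rw [M_eval]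
  rw [e] at h
  exact h.deriv.symm

lemma DD_at_zero (n : ℕ) : DD (n + 1) 0 = Pgauss (n + 1) 0 := by
  rw [DD_succ]; simp; ring

lemma DD_ne (n : ℕ) (z : ℂ) (h : OO (n + 1) z = 0) : DD (n + 1) z ≠ 0 := by
  by_cases hz : z = 0
  · subst hz
    rw [DD_at_zero]; exact Pg_at_zero _
  · obtain ⟨y, hy, rfl⟩ := OO_root_imag n z hz h
    obtain ⟨δ, hδ, hd, -⟩ := OO_root_delta n y hy h
    set z : ℂ := y * I
    have hE : Pgauss (n + 1) z = Pgauss (n + 1) (-z) := by rw [OO] at h; exact sub_eq_zero.mp h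
    obtain ⟨hE0, hR⟩ := Rg_eq n z 1 (by rw [one_mul]; exact hE)
    have hu := hd.unique (Rg_hasDeriv n z hE0)
    rw [hR] at hu
    have hc := Pg_cas n z
    rw [hE] at hc
    have hO : OO n z = - (2 * z * (-z ^ 2) ^ n) / Pgauss (n + 1) (-z) := by
      rw [eq_div_iff hE0, ← hc, OO]; ring
    have : DD (n + 1) z = Pgauss (n + 1) (-z) * (1 / δ) := by
      rw [DD_succ, hE, hu, hO]
      field_simp
      ring
    rw [this]
    refine mul_ne_zero hE0 (one_div_ne_zero ?_)
    exact_mod_cast (by linarith : δ ≠ 0)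

lemma M_nodup (n : ℕ) : (QPade (n + 1) 1).roots.Nodup := by
  rw [Multiset.nodup_iff_count_le_one]
  intro z
  rw [count_roots]
  by_contra hlt
  push Not at hlt
  rw [one_lt_rootMultiplicity_iff_isRoot (M_ne n)] at hlt
  obtain ⟨h1, h2⟩ := hlt
  rw [IsRoot, M_eval] at h1
  rw [IsRoot, M_deriv] at h2
  exact DD_ne n z h1 h2

lemma OO_neg (m : ℕ) (z : ℂ) : OO m (-z) = - OO m z := by simp [OO]

lemma M_roots (n : ℕ) : ∃ r : Fin ((n + 1 + 1) / 2 - 1) → ℝ, (∀ ℓ, r ℓ ≠ 0) ∧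
    (QPade (n + 1) 1).roots
        = 0 ::ₘ (Multiset.map (fun ℓ => (r ℓ : ℂ) * Complex.I) Finset.univ.val
            + Multiset.map (fun ℓ => -((r ℓ : ℂ) * Complex.I)) Finset.univ.val) := by
  classical
  set M := QPade (n + 1) 1 with hM
  have hmem : ∀ z, z ∈ M.roots ↔ OO (n + 1) z = 0 := by
    intro z
    rw [mem_roots (M_ne n), IsRoot, M_eval]
  set T : Finset ℂ := M.roots.toFinset.filter (fun z => 0 < z.im) with hT
  have hTm : ∀ z, z ∈ T ↔ OO (n + 1) z = 0 ∧ 0 < z.im := by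
    intro z; rw [hT, Finset.mem_filter, Multiset.mem_toFinset, hmem]
  have hroots : M.roots = 0 ::ₘ (T.val + T.val.map (fun z => -z)) := by
    refine (Multiset.Nodup.ext (M_nodup n) ?_).mpr ?_
    · rw [Multiset.nodup_cons, Multiset.nodup_add]
      refine ⟨?_, T.nodup, T.nodup.map neg_injective, ?_⟩
      · simp only [Multiset.mem_add, Multiset.mem_map, Finset.mem_val, hTm]
        rintro (⟨-, h⟩ | ⟨a, ⟨-, h⟩, h0⟩)
        · simp at h
        · have : a = 0 := by simpa using h0
          simp [this] at h
      · rw [Multiset.disjoint_left]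
        intro a ha hb
        rw [Finset.mem_val, hTm] at ha
        rw [Multiset.mem_map] at hb
        obtain ⟨b, hb, rfl⟩ := hb
        rw [Finset.mem_val, hTm] at hb
        have := ha.2
        have := hb.2
        simp at *
        linarith
    · intro z
      rw [hmem]
      simp only [Multiset.mem_cons, Multiset.mem_add, Multiset.mem_map, Finset.mem_val, hTm]
      constructor
      · intro h
        by_cases hz : z = 0
        · exact Or.inl hz
        · right
          obtain ⟨y, hy, rfl⟩ := OO_root_imag n z hz h
          rcases lt_or_gt_of_ne hy with h1 | h1
          · right
            exact ⟨-(y * I), ⟨by rw [OO_neg, h, neg_zero], by simpa using h1⟩, by ring⟩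
          · left
            exact ⟨h, by simpa using h1⟩
      · rintro (rfl | ⟨h, -⟩ | ⟨a, ⟨h, -⟩, rfl⟩)
        · simp [OO]
        · exact h
        · rw [OO_neg, h, neg_zero]
  have hcard : T.card = (n + 1 + 1) / 2 - 1 := by
    have h1 : M.roots.card = M.natDegree := IsAlgClosed.card_roots_eq_natDegree
    have h2 := congrArg Multiset.card hroots
    rw [h1] at h2
    simp only [Multiset.card_cons, Multiset.card_add, Multiset.card_map, Finset.card_val] at h2
    rcases Nat.even_or_odd (n + 1) with he | ho
    · rw [hM, M_natDegree_even n he] at h2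
      omega
    · rw [hM, M_natDegree_odd _ ho] at h2
      omega
  let e := (T.equivFinOfCardEq hcard).symm
  have hTval : T.val = Multiset.map (fun ℓ => (e ℓ : ℂ)) Finset.univ.val := by
    have h1 := Multiset.map_univ_val_equiv e
    have h2 := congrArg (Multiset.map (fun x : T => (x : ℂ))) h1
    rw [Multiset.map_map] at h2
    have h3 : Multiset.map (fun x : T => (x : ℂ)) Finset.univ.val = T.val := by
      exact Multiset.attach_map_val T.val
    rw [h3] at h2
    exact h2.symm
  have hel : ∀ ℓ, (((e ℓ : ℂ).im : ℝ) : ℂ) * I = e ℓ ∧ (e ℓ : ℂ).im ≠ 0 := by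
    intro ℓ
    have hh := (hTm _).mp (e ℓ).2
    have hne : (e ℓ : ℂ) ≠ 0 := by
      intro h0
      have := hh.2
      rw [h0] at this; simp at this
    obtain ⟨y, hy, h⟩ := OO_root_imag n _ hne hh.1
    refine ⟨?_, hh.2.ne'⟩
    rw [h]; simp
  refine ⟨fun ℓ => (e ℓ : ℂ).im, fun ℓ => (hel ℓ).2, ?_⟩
  have h1 : (fun ℓ => (((e ℓ : ℂ).im : ℝ) : ℂ) * I) = fun ℓ => (e ℓ : ℂ) := by
    ext ℓ; rw [(hel ℓ).1]
  have h2 : (fun ℓ => -((((e ℓ : ℂ).im : ℝ) : ℂ) * I)) = fun ℓ => -(e ℓ : ℂ) := by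
    ext ℓ; rw [(hel ℓ).1]
  rw [h1, h2, hroots, hTval, Multiset.map_map]
  rfl

lemma Dm_eq (n : ℕ) (hm : Even (n + 1)) (r : Fin ((n + 1 + 1) / 2 - 1) → ℝ)
    (h : (QPade (n + 1) 1).roots
        = 0 ::ₘ (Multiset.map (fun ℓ => (r ℓ : ℂ) * Complex.I) Finset.univ.val
            + Multiset.map (fun ℓ => -((r ℓ : ℂ) * Complex.I)) Finset.univ.val)) :
    2 * pcoef (n + 1) n * ∏ ℓ, (r ℓ : ℂ) ^ 2 = ((2 * (n + 1)).factorial : ℂ) / ((n + 1).factorial : ℂ) := by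
  have hn : Odd n := by
    rcases Nat.even_or_odd n with h | h
    · exact absurd hm (by simpa [Nat.even_add_one] using h)
    · exact h
  have hs := (IsAlgClosed.splits (QPade (n + 1) 1)).eq_prod_roots
  have hlc : (QPade (n + 1) 1).leadingCoeff = 2 * pcoef (n + 1) n := by
    rw [leadingCoeff, M_natDegree_even n hm, M_coeff_even n hn]
  rw [hlc, h] at hs
  have hd := M_deriv (n + 1) 0
  rw [DD_at_zero] at hd
  have hp0 : Pgauss (n + 1) 0 = ((2 * (n + 1)).factorial : ℂ) / ((n + 1).factorial : ℂ) := by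
    unfold Pgauss
    rw [Finset.sum_range_succ']
    simp [pcoef]
  rw [← hp0, ← hd, hs]
  simp only [Multiset.map_cons, Multiset.prod_cons, Multiset.map_add, Multiset.prod_add,
    Multiset.map_map, map_zero, sub_zero]
  simp only [derivative_mul, derivative_C, derivative_X, eval_add, eval_mul, eval_C, eval_X,
    zero_mul, one_mul, zero_add, add_zero, mul_zero, eval_one]
  congr 1
  change _ = eval 0 (∏ ℓ, (X - C ((r ℓ : ℂ) * I))) * eval 0 (∏ ℓ, (X - C (-((r ℓ : ℂ) * I))))
  rw [eval_prod, eval_prod, ← Finset.prod_mul_distrib]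
  refine Finset.prod_congr rfl fun ℓ _ => ?_
  simp only [eval_sub, eval_X, eval_C]
  linear_combination ((r ℓ : ℂ) ^ 2) * I_sq


lemma last_bigO (p : ℂ) : (fun t : ℂ => p * (1 + exp t) / (exp t - 1) - 2 * p / t)
    =O[𝓝[≠] (0 : ℂ)] fun _ => (1 : ℂ) := by
  have h1 : (fun t : ℂ => t * (1 + exp t) - 2 * (exp t - 1)) =O[𝓝 (0 : ℂ)] fun t => t ^ (1 + 1) := by
    refine bigO_int _ (fun t => 1 - exp t + t * exp t) 1 ?_ (by simp) ?_
    · refine Filter.Eventually.of_forall fun t => ?_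
      have a := Complex.hasDerivAt_exp t
      have b : HasDerivAt (fun t : ℂ => t * (1 + exp t) - 2 * (exp t - 1)) _ t :=
        ((hasDerivAt_id t).mul (a.const_add 1)).sub ((a.sub_const 1).const_mul 2)
      convert b using 1
      simp; ring
    · have hd : DifferentiableAt ℂ (fun t : ℂ => 1 - exp t + t * exp t) 0 := by fun_prop
      have := hd.isBigO_sub
      simpa using this
  have h3 : (fun u : ℂ => u) =O[𝓝 (0 : ℂ)] fun u => exp u - 1 := by
    have := ((Complex.hasDerivAt_exp 0).isTheta_sub (by simp)).2
    simpa [Function.comp_def] using this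
  have h4 : (fun t : ℂ => t ^ (1 + 1)) =O[𝓝 (0 : ℂ)] fun t => t * (exp t - 1) := by
    have := (isBigO_refl (fun t : ℂ => t) (𝓝 0)).mul h3
    simpa [pow_two] using this
  have h5 := (h1.trans h4).mono (nhdsWithin_le_nhds (s := {0}ᶜ))
  have h6 := h5.mul (isBigO_refl (fun t : ℂ => (t * (exp t - 1))⁻¹) (𝓝[≠] 0))
  have h7 : (fun t : ℂ => (t * (exp t - 1)) * (t * (exp t - 1))⁻¹) =O[𝓝[≠] (0 : ℂ)] fun _ => (1 : ℂ) := by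
    refine IsBigO.of_bound 1 (Filter.Eventually.of_forall fun t => ?_)
    by_cases h : t * (exp t - 1) = 0
    · rw [h]; simp
    · rw [mul_inv_cancel₀ h]; simp
  have h8 := (h6.trans h7).const_mul_left p
  have hne : ∀ᶠ t in 𝓝[≠] (0 : ℂ), exp t - 1 ≠ 0 := by
    have := (Complex.hasDerivAt_exp 0).eventually_ne (c := 1) (by simp)
    filter_upwards [this] with t ht
    exact sub_ne_zero.mpr ht
  refine h8.congr' ?_ (Filter.EventuallyEq.refl _ _)
  filter_upwards [hne, self_mem_nhdsWithin] with t ht h0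
  have h0' : t ≠ 0 := h0
  field_simp

theorem main_aux (n : ℕ) :
    ∃ (r : Fin ((n + 1 + 1) / 2 - 1) → ℝ) (Z : ℂ → ℂ → ℂ) (δ : Fin ((n + 1 + 1) / 2 - 1) → ℝ),
      (∀ ℓ, r ℓ ≠ 0) ∧
      (QPade (n + 1) 1).roots
        = 0 ::ₘ (Multiset.map (fun ℓ => (r ℓ : ℂ) * Complex.I) Finset.univ.val
            + Multiset.map (fun ℓ => -((r ℓ : ℂ) * Complex.I)) Finset.univ.val) ∧
      (∀ ζ ∈ (QPade (n + 1) 1).roots, AnalyticAt ℂ (Z ζ) 0 ∧ Z ζ 0 = ζ ∧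
        ∀ᶠ t in 𝓝 (0 : ℂ), Rgauss (n + 1) (Z ζ t) = exp t) ∧
      (∀ ℓ, 1 < δ ℓ ∧
        ((fun t : ℂ => Z (r ℓ * I) t - ((r ℓ : ℂ) * Complex.I + (δ ℓ : ℂ) * t))
          =O[𝓝 (0 : ℂ)] fun t : ℂ => t ^ 2) ∧
        ((fun t : ℂ => Z (-(r ℓ * I)) t - (-((r ℓ : ℂ) * Complex.I) + (δ ℓ : ℂ) * t))
          =O[𝓝 (0 : ℂ)] fun t : ℂ => t ^ 2)) := by
  classical
  obtain ⟨r, hr0, hr⟩ := M_roots n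
  have hmem : ∀ z, z ∈ (QPade (n + 1) 1).roots ↔ OO (n + 1) z = 0 := by
    intro z
    rw [mem_roots (M_ne n), IsRoot, M_eval]
  have hroot : ∀ ℓ, OO (n + 1) (r ℓ * I) = 0 := by
    intro ℓ
    rw [← hmem, hr]
    simp
  have hRP : ∀ z, OO (n + 1) z = 0 → Pgauss (n + 1) (-z) ≠ 0 ∧ Rgauss (n + 1) z = 1 := by
    intro z hz
    refine Rg_eq n z 1 ?_
    rw [OO] at hz
    rw [one_mul]; exact sub_eq_zero.mp hz
  choose δ hδ1 hδp hδn using fun ℓ => OO_root_delta n (r ℓ) (hr0 ℓ) (hroot ℓ)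
  have hex : ∀ ζ : ℂ, ∃ z : ℂ → ℂ, OO (n + 1) ζ = 0 → AnalyticAt ℂ z 0 ∧ z 0 = ζ ∧
      (∀ᶠ t in 𝓝 (0 : ℂ), Rgauss (n + 1) (z t) = exp t) ∧
      ∀ δ : ℂ, δ ≠ 0 → HasDerivAt (Rgauss (n + 1)) (1 / δ) ζ →
      ((fun t : ℂ => z t - (ζ + δ * t)) =O[𝓝 (0 : ℂ)] fun t : ℂ => t ^ 2) := by
    intro ζ
    by_cases hζ : OO (n + 1) ζ = 0
    · have hdd : ∃ δ : ℂ, δ ≠ 0 ∧ HasDerivAt (Rgauss (n + 1)) (1 / δ) ζ := by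
        by_cases h0 : ζ = 0
        · subst h0
          refine ⟨1, one_ne_zero, ?_⟩
          have := Rg_hasDeriv n 0 (hRP 0 hζ).1
          rw [(hRP 0 hζ).2] at this
          simpa using this
        · obtain ⟨y, hy, rfl⟩ := OO_root_imag n ζ h0 hζ
          obtain ⟨d, hd1, hd, -⟩ := OO_root_delta n y hy hζ
          exact ⟨d, by exact_mod_cast (by linarith : d ≠ 0), hd⟩
      obtain ⟨d, hd0, hd⟩ := hdd
      obtain ⟨z, h1, h2, h3, h4⟩ := branch (n + 1) ζ d (hRP ζ hζ).1 (hRP ζ hζ).2 hd0 hd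
      refine ⟨z, fun _ => ⟨h1, h2, h3, fun d' hd0' hd' => ?_⟩⟩
      have : d' = d := by
        have := hd'.unique hd
        simpa using this
      rw [this]; exact h4
    · exact ⟨0, fun h => absurd h hζ⟩
  choose Z hZ using hex
  refine ⟨r, Z, δ, hr0, hr, ?_, ?_⟩
  · intro ζ hζ
    obtain ⟨h1, h2, h3, -⟩ := hZ ζ ((hmem ζ).mp hζ)
    exact ⟨h1, h2, h3⟩
  · intro ℓ
    have hne : (δ ℓ : ℂ) ≠ 0 := by
      have := hδ1 ℓ
      exact_mod_cast (by linarith : δ ℓ ≠ 0)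
    refine ⟨hδ1 ℓ, ?_, ?_⟩
    · exact (hZ _ (hroot ℓ)).2.2.2 _ hne (hδp ℓ)
    · exact (hZ _ (by rw [OO_neg, hroot ℓ, neg_zero])).2.2.2 _ hne (hδn ℓ)

lemma roots_le (n : ℕ) (Z : ℂ → ℂ → ℂ)
    (hZ : ∀ ζ ∈ (QPade (n + 1) 1).roots, AnalyticAt ℂ (Z ζ) 0 ∧ Z ζ 0 = ζ ∧
        ∀ᶠ t in 𝓝 (0 : ℂ), Rgauss (n + 1) (Z ζ t) = exp t) :
    ∀ᶠ t in 𝓝[≠] (0 : ℂ), (QPade (n + 1) (exp t)).natDegree = n + 1 ∧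
      (QPade (n + 1) 1).roots.map (fun ζ => Z ζ t) ≤ (QPade (n + 1) (exp t)).roots := by
  classical
  set S := (QPade (n + 1) 1).roots.toFinset with hS
  have hSm : ∀ ζ, ζ ∈ S ↔ ζ ∈ (QPade (n + 1) 1).roots := fun ζ => Multiset.mem_toFinset
  have e1 : ∀ᶠ t in 𝓝 (0 : ℂ), ∀ ζ ∈ S, Rgauss (n + 1) (Z ζ t) = exp t := by
    rw [Filter.eventually_all_finset]
    intro ζ hζ
    exact (hZ ζ ((hSm ζ).mp hζ)).2.2
  have e2 : ∀ᶠ t in 𝓝 (0 : ℂ), ∀ ζ ∈ S, ∀ ξ ∈ S, ζ ≠ ξ → Z ζ t ≠ Z ξ t := by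
    rw [Filter.eventually_all_finset]
    intro ζ hζ
    rw [Filter.eventually_all_finset]
    intro ξ hξ
    obtain ⟨a1, a2, -⟩ := hZ ζ ((hSm ζ).mp hζ)
    obtain ⟨b1, b2, -⟩ := hZ ξ ((hSm ξ).mp hξ)
    by_cases h : ζ = ξ
    · exact Filter.Eventually.of_forall fun t hne => absurd h hne
    · have hne : Z ζ 0 ≠ Z ξ 0 := by rw [a2, b2]; exact h
      have hc : ContinuousAt (fun t => Z ζ t - Z ξ t) 0 := a1.continuousAt.sub b1.continuousAt
      filter_upwards [hc.eventually_ne (sub_ne_zero.mpr hne)] with t ht _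
      exact sub_ne_zero.mp ht
  have e3 : ∀ᶠ t in 𝓝[≠] (0 : ℂ), 1 - (-1) ^ (n + 1) * exp t ≠ 0 := by
    rcases Nat.even_or_odd (n + 1) with he | ho
    · rw [he.neg_one_pow]
      have := (Complex.hasDerivAt_exp 0).eventually_ne (c := 1) (by simp)
      filter_upwards [this] with t ht
      rw [one_mul]
      exact sub_ne_zero.mpr ht.symm
    · rw [ho.neg_one_pow]
      have hc : ContinuousAt (fun t : ℂ => 1 - (-1) * exp t) 0 := by fun_prop
      exact (hc.eventually_ne (by norm_num [exp_zero])).filter_mono nhdsWithin_le_nhds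
  filter_upwards [e1.filter_mono nhdsWithin_le_nhds, e2.filter_mono nhdsWithin_le_nhds, e3]
    with t h1 h2 h3
  have hdeg := Q_natDegree (n + 1) (exp t) h3
  have hQ : QPade (n + 1) (exp t) ≠ 0 := by
    intro h; rw [h] at hdeg; simp at hdeg
  refine ⟨hdeg, ?_⟩
  rw [Multiset.le_iff_subset]
  · intro w hw
    rw [Multiset.mem_map] at hw
    obtain ⟨ζ, hζ, rfl⟩ := hw
    have hR := h1 ζ ((hSm ζ).mpr hζ)
    rw [mem_roots hQ, IsRoot, Q_eval, ← hR, Rgauss]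
    have : Pgauss (n + 1) (-(Z ζ t)) ≠ 0 := by
      intro h0
      rw [Rgauss, h0, div_zero] at hR
      exact exp_ne_zero t hR.symm
    field_simp
    ring
  · refine Multiset.Nodup.map_on ?_ (M_nodup n)
    intro x hx y hy hxy
    by_contra hne
    exact h2 x ((hSm x).mpr hx) y ((hSm y).mpr hy) hne hxy

theorem pade_solutions_theta_zero (m : ℕ) (hm : 1 ≤ m) :
    ∃ (r : Fin ((m + 1) / 2 - 1) → ℝ) (z1 : ℂ → ℂ)
      (zp zn : Fin ((m + 1) / 2 - 1) → ℂ → ℂ) (δ : Fin ((m + 1) / 2 - 1) → ℝ),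
      (∀ ℓ, r ℓ ≠ 0) ∧
      (MgaussPoly m 0).roots
        = 0 ::ₘ (Multiset.map (fun ℓ => (r ℓ : ℂ) * Complex.I) Finset.univ.val
            + Multiset.map (fun ℓ => -((r ℓ : ℂ) * Complex.I)) Finset.univ.val) ∧
      (∀ᶠ t : ℂ in 𝓝[≠] (0 : ℂ), Rgauss m (z1 t) = Complex.exp t) ∧
      ((fun t : ℂ => z1 t - t) =O[𝓝 (0 : ℂ)] fun t : ℂ => t ^ (2 * m + 1)) ∧
      (∀ ℓ, 1 < δ ℓ ∧
        (∀ᶠ t : ℂ in 𝓝[≠] (0 : ℂ),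
          Rgauss m (zp ℓ t) = Complex.exp t ∧ Rgauss m (zn ℓ t) = Complex.exp t) ∧
        ((fun t : ℂ => zp ℓ t - ((r ℓ : ℂ) * Complex.I + (δ ℓ : ℂ) * t))
          =O[𝓝 (0 : ℂ)] fun t : ℂ => t ^ 2) ∧
        ((fun t : ℂ => zn ℓ t - (-((r ℓ : ℂ) * Complex.I) + (δ ℓ : ℂ) * t))
          =O[𝓝 (0 : ℂ)] fun t : ℂ => t ^ 2)) ∧
      (Odd m →
        ∀ᶠ t : ℂ in 𝓝[≠] (0 : ℂ),
          (QPade m (Complex.exp t)).roots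
            = z1 t ::ₘ (Multiset.map (fun ℓ => zp ℓ t) Finset.univ.val
                + Multiset.map (fun ℓ => zn ℓ t) Finset.univ.val)) ∧
      (Even m → ∃ (zlast : ℂ → ℂ) (Dm : ℝ),
        Dm = (((2 * m).factorial : ℝ) / (m.factorial : ℝ)) / ∏ ℓ, (r ℓ) ^ 2 ∧
        0 < Dm ∧
        (∀ᶠ t : ℂ in 𝓝[≠] (0 : ℂ),
          (QPade m (Complex.exp t)).roots
            = z1 t ::ₘ zlast t ::ₘ (Multiset.map (fun ℓ => zp ℓ t) Finset.univ.val
                + Multiset.map (fun ℓ => zn ℓ t) Finset.univ.val)) ∧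
        ((fun t : ℂ => zlast t - (Dm : ℂ) / t)
          =O[𝓝[≠] (0 : ℂ)] fun _ : ℂ => (1 : ℂ))) := by
  obtain ⟨n, rfl⟩ : ∃ n, m = n + 1 := ⟨m - 1, by omega⟩
  obtain ⟨r, Z, δ, hr0, hr, hZ, hδ⟩ := main_aux n
  have hle := roots_le n Z hZ
  have hp : ∀ ℓ, (r ℓ : ℂ) * I ∈ (QPade (n + 1) 1).roots := by intro ℓ; rw [hr]; simp
  have hn : ∀ ℓ, -((r ℓ : ℂ) * I) ∈ (QPade (n + 1) 1).roots := by intro ℓ; rw [hr]; simp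
  have h0 : (0 : ℂ) ∈ (QPade (n + 1) 1).roots := by rw [hr]; simp
  have hmap : ∀ t, (QPade (n + 1) 1).roots.map (fun ζ => Z ζ t)
      = Z 0 t ::ₘ (Multiset.map (fun ℓ => Z (r ℓ * I) t) Finset.univ.val
          + Multiset.map (fun ℓ => Z (-(r ℓ * I)) t) Finset.univ.val) := by
    intro t
    rw [hr, Multiset.map_cons, Multiset.map_add, Multiset.map_map, Multiset.map_map]
    rfl
  refine ⟨r, Z 0, fun ℓ => Z (r ℓ * I), fun ℓ => Z (-(r ℓ * I)), δ, hr0, ?_, ?_, ?_, ?_, ?_, ?_⟩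
  · rw [M_eq]; exact hr
  · exact (hZ 0 h0).2.2.filter_mono nhdsWithin_le_nhds
  · exact branch_one n (Z 0) (hZ 0 h0).1 (hZ 0 h0).2.1 (hZ 0 h0).2.2
  · intro ℓ
    refine ⟨(hδ ℓ).1, ?_, (hδ ℓ).2.1, (hδ ℓ).2.2⟩
    exact ((hZ _ (hp ℓ)).2.2.and (hZ _ (hn ℓ)).2.2).filter_mono nhdsWithin_le_nhds
  · intro hodd
    filter_upwards [hle] with t ht
    obtain ⟨hdeg, hle⟩ := ht
    rw [← hmap]
    refine (Multiset.eq_of_le_of_card_le hle ?_).symm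
    rw [Multiset.card_map, IsAlgClosed.card_roots_eq_natDegree, IsAlgClosed.card_roots_eq_natDegree,
      hdeg, M_natDegree_odd _ hodd]
  · intro heven
    have hnodd : Odd n := by
      rcases Nat.even_or_odd n with h | h
      · exact absurd heven (by simpa [Nat.even_add_one] using h)
      · exact h
    have hD := Dm_eq n heven r hr
    set Dm : ℝ := (((2 * (n + 1)).factorial : ℝ) / ((n + 1).factorial : ℝ)) / ∏ ℓ, (r ℓ) ^ 2 with hDm
    have hprod : 0 < ∏ ℓ, (r ℓ) ^ 2 := Finset.prod_pos fun ℓ _ => by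
      have := hr0 ℓ; positivity
    have hDc : (Dm : ℂ) = 2 * pcoef (n + 1) n := by
      rw [hDm]
      push_cast
      rw [← hD]
      have : (∏ ℓ, (r ℓ : ℂ) ^ 2) ≠ 0 := by exact_mod_cast hprod.ne'
      field_simp
    refine ⟨fun t => pcoef (n + 1) n * (1 + exp t) / (exp t - 1)
        - ((QPade (n + 1) 1).roots.map (fun ζ => Z ζ t)).sum, Dm, rfl, ?_, ?_, ?_⟩
    · have := Nat.factorial_pos (2 * (n + 1))
      have := Nat.factorial_pos (n + 1)
      rw [hDm]; positivity
    · filter_upwards [hle] with t ht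
      obtain ⟨hdeg, hle⟩ := ht
      obtain ⟨u, hu⟩ := Multiset.le_iff_exists_add.mp hle
      have hcu : u.card = 1 := by
        have := congrArg Multiset.card hu
        rw [Multiset.card_add, Multiset.card_map, IsAlgClosed.card_roots_eq_natDegree,
          IsAlgClosed.card_roots_eq_natDegree, hdeg, M_natDegree_even _ heven] at this
        omega
      obtain ⟨a, rfl⟩ := Multiset.card_eq_one.mp hcu
      have hsum := (IsAlgClosed.splits (QPade (n + 1) (exp t))).nextCoeff_eq_neg_sum_roots_mul_leadingCoeff
      have hlc : (QPade (n + 1) (exp t)).leadingCoeff = 1 - exp t := by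
        rw [leadingCoeff, hdeg, Q_coeff, if_pos le_rfl, heven.neg_one_pow]
        have : pcoef (n + 1) (n + 1) = 1 := by
          have h := pcoef_add (n + 1) 0
          simp only [add_zero, mul_zero] at h
          rw [h]
          have := fac_ne (n + 1)
          simp [this, Nat.factorial_ne_zero]
        rw [this]; ring
      have hne : 1 - exp t ≠ 0 := by
        rw [← hlc, leadingCoeff_ne_zero]
        intro h; rw [h] at hdeg; simp at hdeg
      have hnc : (QPade (n + 1) (exp t)).nextCoeff = pcoef (n + 1) n * (1 + exp t) := by
        rw [nextCoeff_of_natDegree_pos (by omega), hdeg, Nat.add_sub_cancel, Q_coeff,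
          if_pos (by omega), hnodd.neg_one_pow]
        ring
      rw [hnc, hlc, hu, Multiset.sum_add, Multiset.sum_singleton] at hsum
      have hne' : exp t - 1 ≠ 0 := by
        intro h; apply hne; linear_combination -h
      have ha : a = pcoef (n + 1) n * (1 + exp t) / (exp t - 1)
        - ((QPade (n + 1) 1).roots.map (fun ζ => Z ζ t)).sum := by
        rw [eq_sub_iff_add_eq, eq_div_iff hne', hsum]
        ring
      rw [hu, ← ha, Multiset.cons_swap, ← hmap, add_comm, Multiset.singleton_add]
    · have h1 := last_bigO (pcoef (n + 1) n)
      have h2 : ContinuousAt (fun t => ((QPade (n + 1) 1).roots.map (fun ζ => Z ζ t)).sum) 0 := by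
        have hc : ∀ ζ ∈ (QPade (n + 1) 1).roots, ContinuousAt (Z ζ) 0 :=
          fun ζ hζ => (hZ ζ hζ).1.continuousAt
        exact tendsto_multiset_sum _ hc
      have h3 := (h2.tendsto.isBigO_one (F := ℂ)).mono (nhdsWithin_le_nhds (s := {0}ᶜ))
      refine (h1.sub h3).congr_left fun t => ?_
      rw [hDc]; ring
end

section
/- If m is even, the solution ẑ_m(t,0) of R_m(z) = e^t satisfying ẑ_m(t,0) = D_m/t + O(1) (D_m > 0) obeys R_m′(ẑ_m(t,0)) = O(t²) as |t| → 0. If m is odd, the solution ẑ_m(t,π) of R_m(z) = −e^t satisfying ẑ_m(t,π) = E_m/t + O(1) (E_m > 0) obeys R_m′(ẑ_m(t,π)) = O(t²) as |t| → 0. -/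
/-! STATEMENT 14: along the unbounded solution branch `ẑ_m(t,0) = D_m/t + O(1)` of
`R_m(z) = e^t` (m even), respectively `ẑ_m(t,π) = E_m/t + O(1)` of `R_m(z) = −e^t`
(m odd), one has `R_m′(ẑ_m(t,·)) = O(t²)` as `|t| → 0`. -/

open Finset Complex Topology Asymptotics

/-- The function `G` with `R(z) = G(1/z)` for `z ≠ 0`. -/
noncomputable def Ginv (m : ℕ) (w : ℂ) : ℂ :=
  (∑ j ∈ Finset.range (m + 1), pcoef m j * w ^ (m - j)) /
    (∑ j ∈ Finset.range (m + 1), pcoef m j * (-1) ^ j * w ^ (m - j))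

lemma Ginv_eq (m : ℕ) (z : ℂ) (hz : z ≠ 0) : Rgauss m z = Ginv m z⁻¹ := by
  have hzm : z ^ m ≠ 0 := pow_ne_zero _ hz
  have key : ∀ j ∈ Finset.range (m + 1), z ^ j = z ^ m * (z⁻¹) ^ (m - j) := by
    intro j hj
    have hj' : j ≤ m := by simpa [Nat.lt_succ_iff] using hj
    rw [inv_pow, ← div_eq_mul_inv, eq_div_iff (pow_ne_zero _ hz), ← pow_add]
    congr 1
    omega
  have h1 : Pgauss m z = z ^ m *
      ∑ j ∈ Finset.range (m + 1), pcoef m j * (z⁻¹) ^ (m - j) := by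
    rw [Pgauss, Finset.mul_sum]
    refine Finset.sum_congr rfl fun j hj => ?_
    rw [key j hj]; ring
  have h2 : Pgauss m (-z) = z ^ m *
      ∑ j ∈ Finset.range (m + 1), pcoef m j * (-1) ^ j * (z⁻¹) ^ (m - j) := by
    rw [Pgauss, Finset.mul_sum]
    refine Finset.sum_congr rfl fun j hj => ?_
    rw [neg_pow, key j hj]; ring
  rw [Rgauss, h1, h2, Ginv, mul_div_mul_left _ _ hzm]

lemma Ginv_analytic (m : ℕ) : AnalyticAt ℂ (Ginv m) 0 := by
  unfold Ginv
  refine AnalyticAt.div ?_ ?_ ?_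
  · refine Finset.analyticAt_fun_sum _ fun j _ => ?_
    fun_prop
  · refine Finset.analyticAt_fun_sum _ fun j _ => ?_
    fun_prop
  · rw [Finset.sum_range_succ, Finset.sum_eq_zero]
    · have h2 : 2 * m - m = m := by omega
      have hf : (m.factorial : ℂ) ≠ 0 := by exact_mod_cast m.factorial_ne_zero
      simp [pcoef, h2, hf]
    · intro j hj
      have : m - j ≠ 0 := by have := Finset.mem_range.1 hj; omega
      simp [this]

theorem deriv_Rgauss_along_unbounded_solution
    (m : ℕ) (hm : 1 ≤ m) (D : ℝ) (hD : 0 < D) (zh : ℂ → ℂ)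
    (hcase :
      (Even m ∧ (∀ᶠ t : ℂ in 𝓝[≠] (0 : ℂ), Rgauss m (zh t) = Complex.exp t)) ∨
      (Odd m ∧ (∀ᶠ t : ℂ in 𝓝[≠] (0 : ℂ), Rgauss m (zh t) = -Complex.exp t)))
    (hexp : (fun t : ℂ => zh t - (D : ℂ) / t) =O[𝓝[≠] (0 : ℂ)] fun _ : ℂ => (1 : ℂ)) :
    (fun t : ℂ => deriv (Rgauss m) (zh t)) =O[𝓝[≠] (0 : ℂ)] fun t : ℂ => t ^ 2 := by
  have hid : Filter.Tendsto (fun t : ℂ => t) (𝓝[≠] (0 : ℂ)) (𝓝 0) :=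
    Filter.Tendsto.mono_left Filter.tendsto_id nhdsWithin_le_nhds
  have hne : ∀ᶠ t : ℂ in 𝓝[≠] (0 : ℂ), t ≠ 0 := self_mem_nhdsWithin
  have hD' : (D : ℂ) ≠ 0 := by exact_mod_cast hD.ne'
  have hlim : Filter.Tendsto (fun t : ℂ => t * zh t) (𝓝[≠] (0 : ℂ)) (𝓝 (D : ℂ)) := by
    have h1 : (fun t : ℂ => t * (zh t - (D : ℂ) / t)) =O[𝓝[≠] (0 : ℂ)] fun t : ℂ => t * 1 :=
      (isBigO_refl _ _).mul hexp
    have h2 : Filter.Tendsto (fun t : ℂ => t * (zh t - (D : ℂ) / t)) (𝓝[≠] (0 : ℂ)) (𝓝 0) :=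
      h1.trans_tendsto (by simpa using hid)
    have h3 := h2.add_const (D : ℂ)
    rw [zero_add] at h3
    refine h3.congr' ?_
    filter_upwards [hne] with t ht
    field_simp
    ring
  have hzne : ∀ᶠ t : ℂ in 𝓝[≠] (0 : ℂ), zh t ≠ 0 := by
    filter_upwards [hlim.eventually_ne hD'] with t ht
    exact right_ne_zero_of_mul ht
  have hinvO : (fun t : ℂ => (zh t)⁻¹) =O[𝓝[≠] (0 : ℂ)] fun t : ℂ => t := by
    have h1 : (fun t : ℂ => (t * zh t)⁻¹) =O[𝓝[≠] (0 : ℂ)] fun _ : ℂ => (1 : ℂ) :=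
      (hlim.inv₀ hD').isBigO_one ℂ
    have h2 := (isBigO_refl (fun t : ℂ => t) (𝓝[≠] (0 : ℂ))).mul h1
    refine h2.congr' ?_ (by simp)
    filter_upwards [hne, hzne] with t ht hz
    field_simp
  have hinv0 : Filter.Tendsto (fun t : ℂ => (zh t)⁻¹) (𝓝[≠] (0 : ℂ)) (𝓝 0) :=
    hinvO.trans_tendsto hid
  have hG := Ginv_analytic m
  have hGO : (fun t : ℂ => deriv (Ginv m) (zh t)⁻¹) =O[𝓝[≠] (0 : ℂ)] fun _ : ℂ => (1 : ℂ) :=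
    (hG.deriv.continuousAt.tendsto.comp hinv0).isBigO_one ℂ
  have hmain := hGO.mul (hinvO.pow 2).neg_left
  refine hmain.congr' ?_ (by simp)
  filter_upwards [hzne, hinv0.eventually hG.eventually_analyticAt] with t hz hA
  have hev : Rgauss m =ᶠ[𝓝 (zh t)] fun z => Ginv m z⁻¹ := by
    filter_upwards [isOpen_ne.mem_nhds hz] with z hz'
    exact Ginv_eq m z hz'
  have hd : HasDerivAt (fun z => Ginv m z⁻¹)
      (deriv (Ginv m) (zh t)⁻¹ * (-((zh t) ^ 2)⁻¹)) (zh t) :=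
    HasDerivAt.comp (zh t) hA.differentiableAt.hasDerivAt (hasDerivAt_inv hz)
  rw [hev.deriv_eq, hd.deriv, inv_pow]
end
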